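/- arXiv:2003.11636 — 2 statements merged into one kernel-verified Lean document; each statement's English description precedes it below -/
import Mathlib

section
/- Let F and H be two right-continuous filtrations on a probability space and assume F and H are independent. If M is an F-martingale, then M is a martingale with respect to the filtration G = F ∨ H defined by G_t = F_t ⊔ H_t. (Lemma A.4 (ii), martingale case.) -/
/-!
Fix `s ≤ t`. It must be shown that `∫ M t = ∫ M s` over every set `C` of `F s ⊔ H s`. The sets
`A ∩ B` with `A ∈ F s` and `B ∈ H s` form a π-system generating `F s ⊔ H s`, and for such a set
independence factors the integral (`setIntegral_inter_of_indep`): `∫_{A ∩ B} M r = μ(B) ∫_A M r`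
for `r = s` and `r = t`, while `∫_A M t = ∫_A M s` by the martingale property with respect to `F`.
The collection of sets on which two integrals agree is a λ-system, so the π-λ theorem
(`setIntegral_eq_of_mem_sup`) extends the equality to all of `F s ⊔ H s`.
-/

open MeasureTheory ProbabilityTheory Filter
open scoped NNReal

theorem setIntegral_inter_of_indep {Ω : Type*} {m₁ m₂ m : MeasurableSpace Ω} {μ : Measure Ω}
    [IsProbabilityMeasure μ] (h₁ : m₁ ≤ m) (h₂ : m₂ ≤ m) (hind : Indep m₁ m₂ μ)
    {f : Ω → ℝ} (hf : StronglyMeasurable[m₁] f) (hfi : Integrable f μ)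
    {A B : Set Ω} (hA : MeasurableSet[m₁] A) (hB : MeasurableSet[m₂] B) :
    ∫ ω in A ∩ B, f ω ∂μ = μ.real B * ∫ ω in A, f ω ∂μ := by
  -- The function `1_A f` is independent of `m₂`, so its conditional expectation is constant.
  have hc := condExp_indep_eq h₁ h₂ (hf.indicator hA) hind
  calc ∫ ω in A ∩ B, f ω ∂μ = ∫ ω in B, A.indicator f ω ∂μ := by
        rw [setIntegral_indicator (h₁ _ hA), Set.inter_comm]
    _ = ∫ ω in B, (μ[A.indicator f | m₂]) ω ∂μ :=
        (setIntegral_condExp h₂ (hfi.indicator (h₁ _ hA)) hB).symm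
    _ = ∫ _ in B, (∫ ω, A.indicator f ω ∂μ) ∂μ := integral_congr_ae (ae_restrict_of_ae hc)
    _ = μ.real B * ∫ ω in A, f ω ∂μ := by
        rw [setIntegral_const, integral_indicator (h₁ _ hA), smul_eq_mul]

theorem sup_eq_generateFrom_image2_inter {Ω : Type*} (m₁ m₂ : MeasurableSpace Ω) :
    m₁ ⊔ m₂ = MeasurableSpace.generateFrom
      (Set.image2 (· ∩ ·) {A | MeasurableSet[m₁] A} {B | MeasurableSet[m₂] B}) := by
  apply le_antisymm
  · refine sup_le (fun A hA => ?_) (fun B hB => ?_)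
    · exact MeasurableSpace.measurableSet_generateFrom
        ⟨A, hA, Set.univ, MeasurableSet.univ, Set.inter_univ A⟩
    · exact MeasurableSpace.measurableSet_generateFrom
        ⟨Set.univ, MeasurableSet.univ, B, hB, Set.univ_inter B⟩
  · refine MeasurableSpace.generateFrom_le ?_
    rintro _ ⟨A, hA, B, hB, rfl⟩
    exact @MeasurableSet.inter _ (m₁ ⊔ m₂) _ _
      (le_sup_left (a := m₁) (b := m₂) _ hA) (le_sup_right (a := m₁) (b := m₂) _ hB)

/-- The π-λ step: integrals that agree on all intersections of an `m₁`-set with an `m₂`-set agree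
on every set of `m₁ ⊔ m₂`. -/
theorem setIntegral_eq_of_mem_sup {Ω : Type*} {m₁ m₂ m : MeasurableSpace Ω} {μ : Measure Ω}
    (h₁ : m₁ ≤ m) (h₂ : m₂ ≤ m) {f g : Ω → ℝ} (hf : Integrable f μ) (hg : Integrable g μ)
    (hfg : ∀ A B, MeasurableSet[m₁] A → MeasurableSet[m₂] B →
      ∫ ω in A ∩ B, f ω ∂μ = ∫ ω in A ∩ B, g ω ∂μ)
    {C : Set Ω} (hC : MeasurableSet[m₁ ⊔ m₂] C) :
    ∫ ω in C, f ω ∂μ = ∫ ω in C, g ω ∂μ := by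
  have hle : m₁ ⊔ m₂ ≤ m := sup_le h₁ h₂
  have huniv : ∫ ω, f ω ∂μ = ∫ ω, g ω ∂μ := by
    simpa using hfg Set.univ Set.univ MeasurableSet.univ MeasurableSet.univ
  refine MeasurableSpace.induction_on_inter (m := m₁ ⊔ m₂)
    (C := fun C _ => ∫ ω in C, f ω ∂μ = ∫ ω in C, g ω ∂μ)
    (sup_eq_generateFrom_image2_inter m₁ m₂) ?_ (by simp) ?_ ?_ ?_ C hC
  · rintro _ ⟨A, hA, B, hB, rfl⟩ _ ⟨A', hA', B', hB', rfl⟩ -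
    exact ⟨A ∩ A', MeasurableSet.inter hA hA', B ∩ B', MeasurableSet.inter hB hB',
      Set.inter_inter_inter_comm A A' B B'⟩
  · rintro _ ⟨A, hA, B, hB, rfl⟩
    exact hfg A B hA hB
  · intro t ht h
    have ef := integral_add_compl (hle _ ht) hf
    have eg := integral_add_compl (hle _ ht) hg
    linarith
  · intro s hd hs h
    rw [integral_iUnion (fun i => hle _ (hs i)) hd hf.integrableOn,
      integral_iUnion (fun i => hle _ (hs i)) hd hg.integrableOn]
    exact tsum_congr h

/-- **Lemma A.4 (ii), martingale case.** If `F` and `H` are independent right-continuous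
filtrations and `M` is an `F`-martingale, then `M` is a martingale with respect to
`G = F ∨ H` (the filtration `t ↦ F t ⊔ H t`). -/
theorem martingale_sup_of_indep
    {Ω : Type*} {m : MeasurableSpace Ω} {μ : Measure Ω} [IsProbabilityMeasure μ]
    (F H : Filtration ℝ≥0 m)
    (hF_rc : ∀ t : ℝ≥0, ⨅ s ∈ Set.Ioi t, F s = F t)
    (hH_rc : ∀ t : ℝ≥0, ⨅ s ∈ Set.Ioi t, H s = H t)
    (h_indep : Indep (⨆ t : ℝ≥0, F t) (⨆ t : ℝ≥0, H t) μ)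
    (M : ℝ≥0 → Ω → ℝ) (hM : Martingale M F μ) :
    Martingale M (F ⊔ H) μ := by
  have hadapt : ∀ t, StronglyMeasurable[(F ⊔ H) t] (M t) := fun t =>
    (hM.stronglyMeasurable t).mono (le_sup_left : F t ≤ F t ⊔ H t)
  have hind : ∀ t s, Indep (F t) (H s) μ := fun t s =>
    indep_of_indep_of_le_left (indep_of_indep_of_le_right h_indep (le_iSup H s)) (le_iSup F t)
  refine ⟨hadapt, fun s t hst => (ae_eq_condExp_of_forall_setIntegral_eq ((F ⊔ H).le s)
    (hM.integrable t) (fun _ _ _ => (hM.integrable s).integrableOn) (fun C hC _ => ?_)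
    (hadapt s).aestronglyMeasurable).symm⟩
  refine setIntegral_eq_of_mem_sup (F.le s) (H.le s) (hM.integrable s) (hM.integrable t)
    (fun A B hA hB => ?_) hC
  -- Both integrals factor; for `M t`, the set `A` is regarded as an element of `F t`.
  rw [setIntegral_inter_of_indep (F.le s) (H.le s) (hind s s) (hM.stronglyMeasurable s)
      (hM.integrable s) hA hB,
    setIntegral_inter_of_indep (F.le t) (H.le s) (hind t s) (hM.stronglyMeasurable t)
      (hM.integrable t) (F.mono hst _ hA) hB,
    hM.setIntegral_eq hst hA]
end

section
/- Let F and H be two filtrations on a probability space that are independent, i.e., F_∞ := ⨆_{t ≥ 0} F_t and H_∞ := ⨆_{t ≥ 0} H_t are independent σ-algebras under μ. Let ξ be a bounded F_∞-measurable random variable and η a bounded H_∞-measurable random variable. Then for every t ≥ 0, E[ξ η | F_t ⊔ H_t] = E[ξ | F_t] · E[η | H_t] μ-almost surely. (Conditional expectation factorization used in the proofs of Lemma A.4 (iii) and Theorem 3.4, Step 4.) -/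
/-!
The product `E[ξ | F t] · E[η | H t]` is integrable and `F t ⊔ H t`-measurable, so it suffices that
it has the same integral as `ξ η` over every set of `F t ⊔ H t`. By the π-λ theorem
(`setIntegral_eq_of_inter`) only the sets `A ∩ B` with `A ∈ F t` and `B ∈ H t` matter. On these,
independence splits both integrals (`setIntegral_inter_mul_of_indep`) into a product of an integral
over `A` and one over `B`, and the factors agree by the defining property of `E[ξ | F t]` and
`E[η | H t]`. Boundedness of `ξ` and `η` serves only to make them integrable.
-/

open MeasureTheory ProbabilityTheory Filter
open scoped NNReal

-- In the binders below, the ambient σ-algebra `m` comes last because instance resolution picks the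
-- most recent one: `Measure Ω` must mean a measure on `m`, not on `m₂`.
lemma indepFun_of_indep_of_stronglyMeasurable {Ω : Type*} {m₁ m₂ m : MeasurableSpace Ω}
    {μ : Measure Ω} (hI : Indep m₁ m₂ μ) {f g : Ω → ℝ}
    (hf : StronglyMeasurable[m₁] f) (hg : StronglyMeasurable[m₂] g) : IndepFun f g μ :=
  (IndepFun_iff_Indep _ _ _).2
    (indep_of_indep_of_le hI hf.measurable.comap_le hg.measurable.comap_le)

lemma setIntegral_inter_mul_of_indep {Ω : Type*} {m₁ m₂ m : MeasurableSpace Ω}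
    {μ : Measure Ω} (h₁ : m₁ ≤ m) (h₂ : m₂ ≤ m) (hI : Indep m₁ m₂ μ) {f g : Ω → ℝ}
    (hf : StronglyMeasurable[m₁] f) (hg : StronglyMeasurable[m₂] g)
    {A B : Set Ω} (hA : MeasurableSet[m₁] A) (hB : MeasurableSet[m₂] B) :
    ∫ ω in A ∩ B, f ω * g ω ∂μ = (∫ ω in A, f ω ∂μ) * ∫ ω in B, g ω ∂μ := by
  have hfA := hf.indicator hA
  have hgB := hg.indicator hB
  rw [← integral_indicator (h₁ _ hA), ← integral_indicator (h₂ _ hB),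
    ← integral_indicator ((h₁ _ hA).inter (h₂ _ hB)),
    ← (indepFun_of_indep_of_stronglyMeasurable hI hfA hgB).integral_fun_mul_eq_mul_integral
      (hfA.mono h₁).aestronglyMeasurable (hgB.mono h₂).aestronglyMeasurable]
  simp_rw [Set.inter_indicator_mul]

/-- Two integrable functions with equal integrals over all sets `A ∩ B`, where `A ∈ m₁` and
`B ∈ m₂`, have equal integrals over all sets of `m₁ ⊔ m₂`: those intersections form a π-system
generating `m₁ ⊔ m₂`. -/
lemma setIntegral_eq_of_inter {Ω : Type*} {m₁ m₂ m : MeasurableSpace Ω}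
    {μ : Measure Ω} (h₁ : m₁ ≤ m) (h₂ : m₂ ≤ m) {f g : Ω → ℝ}
    (hf : Integrable f μ) (hg : Integrable g μ)
    (h : ∀ A B, MeasurableSet[m₁] A → MeasurableSet[m₂] B →
      ∫ ω in A ∩ B, f ω ∂μ = ∫ ω in A ∩ B, g ω ∂μ)
    {s : Set Ω} (hs : MeasurableSet[m₁ ⊔ m₂] s) :
    ∫ ω in s, f ω ∂μ = ∫ ω in s, g ω ∂μ := by
  have hle : m₁ ⊔ m₂ ≤ m := sup_le h₁ h₂
  let S : Set (Set Ω) := {s | ∃ A B, MeasurableSet[m₁] A ∧ MeasurableSet[m₂] B ∧ s = A ∩ B}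
  have hgen : m₁ ⊔ m₂ = MeasurableSpace.generateFrom S := by
    apply le_antisymm
    · refine sup_le (fun A hA => ?_) (fun B hB => ?_)
      · exact MeasurableSpace.measurableSet_generateFrom
          ⟨A, Set.univ, hA, .univ, (Set.inter_univ A).symm⟩
      · exact MeasurableSpace.measurableSet_generateFrom
          ⟨Set.univ, B, .univ, hB, (Set.univ_inter B).symm⟩
    · apply MeasurableSpace.generateFrom_le
      rintro _ ⟨A, B, hA, hB, rfl⟩
      exact MeasurableSet.inter ((le_sup_left : m₁ ≤ m₁ ⊔ m₂) _ hA)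
        ((le_sup_right : m₂ ≤ m₁ ⊔ m₂) _ hB)
  have hpi : IsPiSystem S := by
    rintro _ ⟨A, B, hA, hB, rfl⟩ _ ⟨A', B', hA', hB', rfl⟩ _
    exact ⟨A ∩ A', B ∩ B', hA.inter hA', hB.inter hB', Set.inter_inter_inter_comm _ _ _ _⟩
  have huniv : ∫ ω, f ω ∂μ = ∫ ω, g ω ∂μ := by
    simpa using h Set.univ Set.univ .univ .univ
  induction s, hs using MeasurableSpace.induction_on_inter hgen hpi with
  | empty => simp
  | basic t ht =>
    obtain ⟨A, B, hA, hB, rfl⟩ := ht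
    exact h A B hA hB
  | compl t ht ih =>
    rw [setIntegral_compl (hle _ ht) hf, setIntegral_compl (hle _ ht) hg, huniv, ih]
  | iUnion t hd ht ih =>
    rw [integral_iUnion (fun i => hle _ (ht i)) hd hf.integrableOn,
      integral_iUnion (fun i => hle _ (ht i)) hd hg.integrableOn]
    exact tsum_congr ih

/-- **Conditional expectation factorization** (used in Lemma A.4 (iii) and Theorem 3.4,
Step 4). If the filtrations `F` and `H` are independent, `ξ` is bounded and
`F_∞`-measurable and `η` is bounded and `H_∞`-measurable, then
`E[ξ η | F t ⊔ H t] = E[ξ | F t] · E[η | H t]` a.s. for every `t`. -/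
theorem condexp_mul_of_indep_filtrations
    {Ω : Type*} {m : MeasurableSpace Ω} {μ : Measure Ω} [IsProbabilityMeasure μ]
    (F H : Filtration ℝ≥0 m)
    (h_indep : Indep (⨆ t : ℝ≥0, F t) (⨆ t : ℝ≥0, H t) μ)
    (ξ η : Ω → ℝ)
    (hξ_meas : StronglyMeasurable[⨆ t : ℝ≥0, F t] ξ)
    (hη_meas : StronglyMeasurable[⨆ t : ℝ≥0, H t] η)
    (hξ_bdd : ∃ C, ∀ ω, |ξ ω| ≤ C)
    (hη_bdd : ∃ C, ∀ ω, |η ω| ≤ C)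
    (t : ℝ≥0) :
    μ[fun ω => ξ ω * η ω | F t ⊔ H t]
      =ᵐ[μ] fun ω => (μ[ξ | F t]) ω * (μ[η | H t]) ω := by
  have hFle : (⨆ t : ℝ≥0, F t) ≤ m := iSup_le F.le
  have hHle : (⨆ t : ℝ≥0, H t) ≤ m := iSup_le H.le
  have hF : F t ≤ ⨆ t : ℝ≥0, F t := le_iSup (fun t => F t) t
  have hH : H t ≤ ⨆ t : ℝ≥0, H t := le_iSup (fun t => H t) t
  obtain ⟨C, hC⟩ := hξ_bdd
  obtain ⟨D, hD⟩ := hη_bdd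
  have hξ : Integrable ξ μ :=
    .of_bound (hξ_meas.mono hFle).aestronglyMeasurable C (.of_forall hC)
  have hη : Integrable η μ :=
    .of_bound (hη_meas.mono hHle).aestronglyMeasurable D (.of_forall hD)
  have hξ' : StronglyMeasurable[F t] (μ[ξ | F t]) := stronglyMeasurable_condExp
  have hη' : StronglyMeasurable[H t] (μ[η | H t]) := stronglyMeasurable_condExp
  have hprod : Integrable (fun ω => ξ ω * η ω) μ :=
    (indepFun_of_indep_of_stronglyMeasurable h_indep hξ_meas hη_meas).integrable_mul hξ hη
  have hprod' : Integrable (fun ω => (μ[ξ | F t]) ω * (μ[η | H t]) ω) μ :=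
    (indepFun_of_indep_of_stronglyMeasurable h_indep (hξ'.mono hF)
      (hη'.mono hH)).integrable_mul integrable_condExp integrable_condExp
  refine (ae_eq_condExp_of_forall_setIntegral_eq (sup_le (F.le t) (H.le t)) hprod
    (fun s _ _ => hprod'.integrableOn) (fun s hs _ => ?_) ?_).symm
  · refine setIntegral_eq_of_inter (F.le t) (H.le t) hprod' hprod (fun A B hA hB => ?_) hs
    rw [setIntegral_inter_mul_of_indep hFle hHle h_indep (hξ'.mono hF) (hη'.mono hH)
        (hF _ hA) (hH _ hB),
      setIntegral_inter_mul_of_indep hFle hHle h_indep hξ_meas hη_meas (hF _ hA) (hH _ hB),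
      setIntegral_condExp (F.le t) hξ hA, setIntegral_condExp (H.le t) hη hB]
  · exact ((hξ'.mono le_sup_left).mul (hη'.mono le_sup_right)).aestronglyMeasurable
end
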